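/- For every integer n ≥ 5, the oriented path Q_n admits a homomorphism to Q_{n-2}. -/

import Mathlib

/-- A homomorphism of digraphs (binary relations) is an arc-preserving vertex map. -/
def Hom {α : Type*} {β : Type*} (A : α → α → Prop) (B : β → β → Prop) (f : α → β) : Prop :=
  ∀ u v, A u v → B (f u) (f v)

/-- `A` admits a homomorphism to `B`. -/
def HomTo {α : Type*} {β : Type*} (A : α → α → Prop) (B : β → β → Prop) : Prop :=
  ∃ f : α → β, Hom A B f

/-- Homomorphic equivalence of digraphs. -/
def HomEquiv {α : Type*} {β : Type*} (A : α → α → Prop) (B : β → β → Prop) : Prop :=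
  HomTo A B ∧ HomTo B A

/-- An oriented graph: no symmetric arcs (in particular, no loops). -/
def IsOriented {α : Type*} (G : α → α → Prop) : Prop := ∀ u v, G u v → ¬ G v u

/-- A digraph is (weakly) connected: any two vertices are joined by a semi-walk. -/
def Conn {α : Type*} (G : α → α → Prop) : Prop :=
  ∀ u v : α, Relation.ReflTransGen (fun a b => G a b ∨ G b a) u v

/-- Direction of the `i`-th arc (between `q i` and `q (i+1)`) of the oriented path `Q n`:
the first two arcs are forward, the middle section `(q 1, …, q (n-2))` alternates
(so its arcs `1 ≤ i ≤ n-3` are forward iff `i` is odd), and the last two arcs agree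
in direction. -/
def QForward (n i : ℕ) : Prop :=
  i = 0 ∨ i = 1 ∨ (i + 3 ≤ n ∧ Odd i) ∨ (i = n - 2 ∧ Even n)

/-- The oriented path `Q n` on vertex set `Fin n`. -/
def QArc (n : ℕ) (u v : Fin n) : Prop :=
  ((v : ℕ) = (u : ℕ) + 1 ∧ QForward n (u : ℕ)) ∨
  ((u : ℕ) = (v : ℕ) + 1 ∧ ¬ QForward n (v : ℕ))

/-- The oriented cycle `AC n` on vertex set `Fin n`, obtained by identifying the endpoints
of the alternating path on `n+1` vertices beginning with a forward arc: the arc between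
`a i` and `a ((i+1) % n)` is forward iff `i` is even. -/
def ACArc (n : ℕ) (u v : Fin n) : Prop :=
  ((v : ℕ) = ((u : ℕ) + 1) % n ∧ Even (u : ℕ)) ∨
  ((u : ℕ) = ((v : ℕ) + 1) % n ∧ ¬ Even (v : ℕ))

/-- The directed path on `k` vertices. -/
def DiPath (k : ℕ) (u v : Fin k) : Prop := (v : ℕ) = (u : ℕ) + 1

/-- The transitive tournament on `k` vertices. -/
def TT (k : ℕ) (u v : Fin k) : Prop := u < v

/-- `(A, B)` is a duality pair: for every digraph `G`, `A → G` iff `G ↛ B`. -/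
def DualityPair {α : Type*} {β : Type*} (A : α → α → Prop) (B : β → β → Prop) : Prop :=
  ∀ (W : Type) (G : W → W → Prop), HomTo A G ↔ ¬ HomTo G B

/-- `o` is an orientation of the undirected graph `G`: every arc of `o` lies on an edge
of `G`, and every edge of `G` gets exactly one of the two directions. -/
def IsOrientationOf {V : Type*} (o : V → V → Prop) (G : SimpleGraph V) : Prop :=
  (∀ u v, o u v → G.Adj u v) ∧ ∀ u v, G.Adj u v → Xor' (o u v) (o v u)

/-- The undirected cycle on `k` vertices. -/
def UCycle (k : ℕ) : SimpleGraph (Fin k) :=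
  SimpleGraph.fromRel (fun u v => (v : ℕ) = ((u : ℕ) + 1) % k)

/-!
Where three successive arcs of an oriented path alternate in direction, the path can be folded in
the shape of a `Z`, which shortens it by two arcs. For `n ≥ 6` the arcs `1, 2, 3` of `Q n`
alternate, and this fold leaves exactly `Q (n - 2)`. The path `Q 5` has no alternating triple, but
its two halves are mirror images of each other, so it folds in the middle onto `Q 3`.
-/

/-- The oriented path on `n` vertices whose `i`-th arc, between the vertices `i` and `i + 1`, is
forward if and only if `d i`; it makes the folds below independent of the pattern of `Q n`.
Values `d i` with `n ≤ i + 1` are irrelevant. -/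
def OrientedPath (n : ℕ) (d : ℕ → Prop) (u v : Fin n) : Prop :=
  ((v : ℕ) = (u : ℕ) + 1 ∧ d u) ∨ ((u : ℕ) = (v : ℕ) + 1 ∧ ¬ d v)

namespace OrientedPath

variable {n m : ℕ} {d e : ℕ → Prop}

theorem homTo_of_walk (f : ℕ → ℕ) (hlt : ∀ i < n, f i < m)
    (hstep : ∀ i, i + 1 < n →
      (f (i + 1) = f i + 1 ∧ (d i ↔ e (f i))) ∨
      (f i = f (i + 1) + 1 ∧ (d i ↔ ¬ e (f (i + 1))))) :
    HomTo (OrientedPath n d) (OrientedPath m e) := by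
  refine ⟨fun u => ⟨f u, hlt u u.isLt⟩, ?_⟩
  rintro ⟨u, hu⟩ ⟨v, hv⟩ (⟨rfl : v = u + 1, hd : d u⟩ | ⟨rfl : u = v + 1, hd : ¬ d v⟩)
  · rcases hstep u hv with ⟨hup, hde⟩ | ⟨hdown, hde⟩
    · exact .inl ⟨hup, hde.mp hd⟩
    · exact .inr ⟨hdown, hde.mp hd⟩
  · rcases hstep v hu with ⟨hup, hde⟩ | ⟨hdown, hde⟩
    · exact .inr ⟨hup, mt hde.mpr hd⟩
    · exact .inl ⟨hdown, not_not.mp (mt hde.mpr hd)⟩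

theorem homTo_of_zigzag {k : ℕ} (hk : k + 2 ≤ n) (hturn : d (k + 1) ↔ ¬ d k)
    (hbefore : ∀ i ≤ k, (d i ↔ e i))
    (hafter : ∀ i, k ≤ i → i + 1 < n → (d (i + 2) ↔ e i)) :
    HomTo (OrientedPath (n + 2) d) (OrientedPath n e) := by
  refine homTo_of_walk (fun i => if i ≤ k + 1 then i else i - 2)
    (fun i hi => by split_ifs <;> omega) fun i hi => ?_
  rcases lt_trichotomy i (k + 1) with hlt | rfl | hgt
  · left
    simpa [hlt.le, Nat.succ_le_of_lt hlt] using hbefore i (Nat.le_of_lt_succ hlt)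
  · right
    simpa [hturn] using not_congr (hbefore k le_rfl)
  · obtain ⟨j, rfl⟩ : ∃ j, i = j + 2 := Nat.exists_eq_add_of_le' (by omega)
    have hj : ¬ j + 2 ≤ k + 1 := by omega
    have hj' : ¬ j + 2 + 1 ≤ k + 1 := by omega
    left
    simp only [hj, hj', if_false]
    exact ⟨by omega, hafter j (by omega) (by omega)⟩

theorem homTo_of_antisymm {r : ℕ} (hfirst : ∀ i < r, (d i ↔ e i))
    (hsecond : ∀ i j, i < r → i + j + 1 = 2 * r → (d j ↔ ¬ e i)) :
    HomTo (OrientedPath (2 * r + 1) d) (OrientedPath (r + 1) e) := by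
  refine homTo_of_walk (fun i => min i (2 * r - i)) (fun i _ => by omega) fun i hi => ?_
  rcases lt_or_ge i r with hir | hri
  · have hmin : min i (2 * r - i) = i := by omega
    left
    simp only [hmin]
    exact ⟨by omega, hfirst i hir⟩
  · have hmin : min (i + 1) (2 * r - (i + 1)) = 2 * r - (i + 1) := by omega
    right
    simp only [hmin]
    exact ⟨by omega, hsecond _ _ (by omega) (by omega)⟩

end OrientedPath

theorem qArc_eq_orientedPath (n : ℕ) : QArc n = OrientedPath n (QForward n) := rfl

theorem qForward_of_le_one {n i : ℕ} (hi : i ≤ 1) : QForward n i := by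
  unfold QForward
  omega

theorem not_qForward_two {n : ℕ} (hn : n ≠ 4) : ¬ QForward n 2 := by
  simp only [QForward, Nat.odd_iff]
  omega

theorem qForward_add_two_iff {n i : ℕ} (hn : 4 ≤ n) (hi : 1 ≤ i) :
    QForward (n + 2) (i + 2) ↔ QForward n i := by
  simp only [QForward, Nat.odd_iff, Nat.even_iff]
  omega

theorem qArc_add_two_homTo {n : ℕ} (hn : 4 ≤ n) : HomTo (QArc (n + 2)) (QArc n) := by
  rw [qArc_eq_orientedPath, qArc_eq_orientedPath]
  refine OrientedPath.homTo_of_zigzag (k := 1) (by omega) ?_ ?_ ?_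
  · exact iff_of_false (not_qForward_two (by omega)) (not_not.mpr (qForward_of_le_one le_rfl))
  · exact fun i hi => iff_of_true (qForward_of_le_one hi) (qForward_of_le_one hi)
  · exact fun i hi _ => qForward_add_two_iff hn hi

theorem qArc_five_homTo_three : HomTo (QArc 5) (QArc 3) := by
  rw [qArc_eq_orientedPath, qArc_eq_orientedPath]
  refine OrientedPath.homTo_of_antisymm (r := 2) ?_ ?_
  · intro i hi
    have hi : i ≤ 1 := Nat.le_of_lt_succ hi
    exact iff_of_true (qForward_of_le_one hi) (qForward_of_le_one hi)
  · intro i j hi hij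
    have hj : ¬ QForward 5 j := by
      simp only [QForward, Nat.odd_iff, Nat.even_iff]
      omega
    exact iff_of_false hj (not_not.mpr (qForward_of_le_one (by omega)))

/-- For every integer `n ≥ 5`, the oriented path `Q n` admits a homomorphism to `Q (n-2)`. -/
theorem stmt0 (n : ℕ) (hn : 5 ≤ n) : HomTo (QArc n) (QArc (n - 2)) := by
  obtain ⟨m, rfl⟩ : ∃ m, n = m + 2 := Nat.exists_eq_add_of_le' (by omega)
  rw [Nat.add_sub_cancel]
  obtain rfl | hm : m = 3 ∨ 4 ≤ m := by omega
  · exact qArc_five_homTo_three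
  · exact qArc_add_two_homTo hm
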